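/- arXiv:2101.07573 — 2 statements merged into one kernel-verified Lean document; each statement's English description precedes it below -/
import Mathlib

section
/- Let τ be a first-order language, T a τ-theory, and M a T-existentially closed τ-structure. If N is a τ-structure which is a substructure of M with N ≺₁ M, then N is also T-existentially closed. -/
open FirstOrder FirstOrder.Language

universe u v

namespace ModelCompanionship

variable {L : FirstOrder.Language.{u, v}}

/-- Iterated existential quantification over the last `k` bound variables. -/
def exsN {α : Type*} : ∀ {n k : ℕ}, L.BoundedFormula α (n + k) → L.BoundedFormula α n
  | _, 0, φ => φ
  | _, _ + 1, φ => exsN φ.ex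

/-- A sentence is universal (Π₁) if it is the universal closure of a
quantifier-free formula. -/
def IsUniversalSentence (φ : L.Sentence) : Prop :=
  ∃ (n : ℕ) (ψ : L.BoundedFormula Empty n), ψ.IsQF ∧ φ = ψ.alls

/-- A sentence is Π₂ if it is of the form `∀ x⃗ ∃ y⃗ φ` with `φ` quantifier-free. -/
def IsPi2Sentence (φ : L.Sentence) : Prop :=
  ∃ (m k : ℕ) (ψ : L.BoundedFormula Empty (m + k)), ψ.IsQF ∧ φ = (exsN ψ).alls

/-- A formula is existential if it is the existential closure of a
quantifier-free formula. -/
def IsExistentialFormula {α : Type*} (φ : L.Formula α) : Prop :=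
  ∃ (n : ℕ) (ψ : L.BoundedFormula α n), ψ.IsQF ∧ φ = ψ.exs

/-- A formula is universal if it is the universal closure of a
quantifier-free formula. -/
def IsUniversalFormula {α : Type*} (φ : L.Formula α) : Prop :=
  ∃ (n : ℕ) (ψ : L.BoundedFormula α n), ψ.IsQF ∧ φ = ψ.alls

/-- A bundled nonempty `L`-structure (with domain in universe `max u v`). -/
structure BStruc (L : FirstOrder.Language.{u, v}) where
  carrier : Type (max u v)
  [str : L.Structure carrier]
  [nonempty' : Nonempty carrier]

instance (N : BStruc L) : L.Structure N.carrier := N.str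

instance (N : BStruc L) : Nonempty N.carrier := N.nonempty'

/-- `φ` is a semantic consequence of `T`: it holds in every (nonempty) model of `T`. -/
def Consequence (T : L.Theory) (φ : L.Sentence) : Prop :=
  ∀ M : BStruc L, M.carrier ⊨ T → M.carrier ⊨ φ

/-- A formula with free variables is a semantic consequence of `T` if its universal
closure holds in every (nonempty) model of `T`. -/
def FormulaConsequence {α : Type*} (T : L.Theory) (φ : L.Formula α) : Prop :=
  ∀ M : BStruc L, M.carrier ⊨ T → ∀ v : α → M.carrier, φ.Realize v

/-- `T_∀`: the set of universal sentences which are consequences of `T`. -/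
def univConsequences (T : L.Theory) : L.Theory :=
  {φ | IsUniversalSentence φ ∧ Consequence T φ}

/-- A theory is complete if it is satisfiable and decides every sentence. -/
def IsCompleteTheory (T : L.Theory) : Prop :=
  T.IsSatisfiable ∧ ∀ φ : L.Sentence, Consequence T φ ∨ Consequence T φ.not

/-- A theory is Π₁-complete if it is satisfiable and decides every universal sentence. -/
def Pi1Complete (T : L.Theory) : Prop :=
  T.IsSatisfiable ∧ ∀ φ : L.Sentence, IsUniversalSentence φ →
    (Consequence T φ ∨ Consequence T φ.not)

/-- An embedding is Σ₁-elementary (`M ≺₁ N`) if it reflects existential formulas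
with parameters in the domain. -/
def Sigma1Elementary {M : Type*} {N : Type*} [L.Structure M] [L.Structure N]
    (j : M ↪[L] N) : Prop :=
  ∀ (n : ℕ) (φ : L.Formula (Fin n)), IsExistentialFormula φ →
    ∀ a : Fin n → M, φ.Realize (fun i => j (a i)) → φ.Realize a

/-- An embedding is elementary if it preserves and reflects all first-order formulas. -/
def ElementaryEmb {M : Type*} {N : Type*} [L.Structure M] [L.Structure N]
    (j : M ↪[L] N) : Prop :=
  ∀ (n : ℕ) (φ : L.Formula (Fin n)) (a : Fin n → M),
    φ.Realize (fun i => j (a i)) ↔ φ.Realize a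

/-- `M` is `T`-existentially closed: it embeds into a model of `T` and every
embedding of `M` into a model of `T` is Σ₁-elementary. -/
def IsEC (T : L.Theory) (M : Type*) [L.Structure M] : Prop :=
  (∃ N : BStruc L, N.carrier ⊨ T ∧ Nonempty (M ↪[L] N.carrier)) ∧
  ∀ N : BStruc L, N.carrier ⊨ T → ∀ j : M ↪[L] N.carrier, Sigma1Elementary j

/-- A theory is model complete if every embedding between its models is elementary. -/
def ModelComplete (T : L.Theory) : Prop :=
  ∀ M N : BStruc L, M.carrier ⊨ T → N.carrier ⊨ T →
    ∀ j : M.carrier ↪[L] N.carrier, ElementaryEmb j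

/-- `Tstar` is the model companion of `T`. -/
def IsModelCompanion (T Tstar : L.Theory) : Prop :=
  (∀ M : BStruc L, M.carrier ⊨ T →
    ∃ N : BStruc L, N.carrier ⊨ Tstar ∧ Nonempty (M.carrier ↪[L] N.carrier)) ∧
  (∀ M : BStruc L, M.carrier ⊨ Tstar →
    ∃ N : BStruc L, N.carrier ⊨ T ∧ Nonempty (M.carrier ↪[L] N.carrier)) ∧
  ModelComplete Tstar

/-- Realization only depends on the values at the free variables. -/
lemma realize_congr_free {α : Type*} [DecidableEq α] {P : Type*} [L.Structure P]
    (θ : L.Formula α) (v w : α → P) (h : ∀ a ∈ θ.freeVarFinset, v a = w a) :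
    θ.Realize v ↔ θ.Realize w := by
  have h1 := BoundedFormula.realize_restrictFreeVar (φ := θ) (xs := (default : Fin 0 → P))
    (f := fun a => a) (v := fun a : θ.freeVarFinset => v a) v (fun _ => rfl)
  have h2 := BoundedFormula.realize_restrictFreeVar (φ := θ) (xs := (default : Fin 0 → P))
    (f := fun a => a) (v := fun a : θ.freeVarFinset => v a) w (fun a => h a a.2)
  exact h1.symm.trans h2

/-- A quantifier-free formula true in `M` can be realized in `N`, fixing elements of `N`. -/
lemma exists_retract {M N : Type*} [L.Structure M] [L.Structure N] [Nonempty N]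
    (i : N ↪[L] M) (hi : Sigma1Elementary i) (θ : L.Formula M) (hθ : θ.IsQF)
    (h : θ.Realize id) : ∃ v : M → N, (∀ x, v (i x) = x) ∧ θ.Realize v := by
  classical
  let S := θ.freeVarFinset
  let e := S.equivFin
  let c : M → Fin (S.card + 1) := fun m => if hm : m ∈ S then (e ⟨m, hm⟩).castSucc else Fin.last _
  have hc : ∀ m ∈ S, ∀ m' ∈ S, c m = c m' → m = m' := by
    intro m hm m' hm' h
    simp only [c, hm, hm', dif_pos] at h
    have := e.injective (Fin.castSucc_injective _ h)
    exact congrArg Subtype.val this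
  let g : M → Fin (S.card + 1) ⊕ Fin (S.card + 1) :=
    fun m => if m ∈ Set.range i then Sum.inl (c m) else Sum.inr (c m)
  let r : M → N := Function.invFun i
  have hr : ∀ x, r (i x) = x := Function.leftInverse_invFun i.injective
  let d : Fin (S.card + 1) → M := fun p =>
    if hp : ∃ m ∈ S, c m = p then hp.choose else i (Classical.arbitrary N)
  have hd : ∀ m ∈ S, d (c m) = m := by
    intro m hm
    have hp : ∃ m' ∈ S, c m' = c m := ⟨m, hm, rfl⟩
    simp only [d, dif_pos hp]
    exact hc _ hp.choose_spec.1 _ hm hp.choose_spec.2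
  let a : Fin (S.card + 1) → N := fun p => r (d p)
  let ψ : L.BoundedFormula (Fin (S.card + 1)) (S.card + 1) := BoundedFormula.relabel g θ
  have hψ : ψ.IsQF := hθ.relabel g
  have key : ∀ {P : Type _} [L.Structure P] (b : Fin (S.card + 1) → P)
      (xs : Fin (S.card + 1) → P), ψ.Realize b xs ↔ θ.Realize (Sum.elim b xs ∘ g) := by
    intro P _ b xs
    simp only [ψ]
    refine (BoundedFormula.realize_relabel (n := 0)).trans ?_
    rw [Formula.Realize, iff_eq_eq]
    exact congr rfl (funext finZeroElim)
  have key' : ∀ {P : Type _} [L.Structure P] (b : Fin (S.card + 1) → P)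
      (xs : Fin (S.card + 1) → P), ψ.Realize b xs ↔ θ.Realize (Sum.elim b xs ∘ g) := by
    intro P _ b xs
    simp only [ψ]
    refine (BoundedFormula.realize_relabel (n := 0)).trans ?_
    rw [Formula.Realize, iff_eq_eq]
    exact congr rfl (funext finZeroElim)
  have hM : ψ.exs.Realize (fun p => i (a p)) := by
    rw [BoundedFormula.realize_exs]
    refine ⟨d, (key _ _).2 ((realize_congr_free θ _ _ ?_).2 h)⟩
    intro m hm
    by_cases hmi : m ∈ Set.range i
    · obtain ⟨x, rfl⟩ := hmi
      simp [g, a, hd _ hm, hr]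
    · simp only [g, if_neg hmi, Function.comp, Sum.elim_inr, hd _ hm, id]
  have hN := hi _ _ ⟨_, ψ, hψ, rfl⟩ a hM
  rw [BoundedFormula.realize_exs] at hN
  obtain ⟨xs, hxs⟩ := hN
  rw [key'] at hxs
  refine ⟨fun m => if m ∈ Set.range i then r m else xs (c m), fun x => by simp [hr],
    (realize_congr_free θ _ _ ?_).2 hxs⟩
  intro m hm
  by_cases hmi : m ∈ Set.range i
  · obtain ⟨x, rfl⟩ := hmi
    simp [g, a, hd _ hm, hr]
  · simp only [g, if_neg hmi, Function.comp, Sum.elim_inr]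

/-- Finite conjunctions of quantifier-free formulas. -/
lemma exists_conj {α : Type*} (F : Finset (L.Formula α)) (hF : ∀ θ ∈ F, θ.IsQF) :
    ∃ θ : L.Formula α, θ.IsQF ∧ ∀ (P : Type (max u v)) [L.Structure P] (w : α → P),
      θ.Realize w ↔ ∀ η ∈ F, η.Realize w := by
  classical
  induction F using Finset.induction_on with
  | empty => exact ⟨⊤, BoundedFormula.IsQF.top, by simp⟩
  | insert η F _ ih =>
    obtain ⟨θ, h1, h2⟩ := ih (fun θ h => hF θ (Finset.mem_insert_of_mem h))
    refine ⟨η ⊓ θ, (hF η (Finset.mem_insert_self _ _)).inf h1, fun P _ w => ?_⟩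
    simp [Formula.realize_inf, h2]

/-- The quantifier-free diagram of `M`. -/
def qfDiag (L : FirstOrder.Language.{u, v}) (M : Type*) [L.Structure M] : L[[M]].Theory :=
  {σ | ∃ θ : L.Formula M, θ.IsQF ∧ θ.Realize (id : M → M) ∧ σ = Formula.equivSentence θ}

/-- A map realizing all true quantifier-free formulas is an embedding. -/
lemma exists_embedding {M Q : Type*} [L.Structure M] [L.Structure Q] (f : M → Q)
    (h : ∀ θ : L.Formula M, θ.IsQF → θ.Realize (id : M → M) → θ.Realize f) :
    ∃ k : M ↪[L] Q, ∀ x, k x = f x := by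
  refine ⟨⟨⟨f, ?_⟩, ?_, ?_⟩, fun _ => rfl⟩
  · intro x y hxy
    by_contra hne
    have := h (Term.equal (Term.var x) (Term.var y)).not
      (BoundedFormula.IsAtomic.equal _ _).isQF.not (by simpa [Formula.realize_not] using hne)
    simp [Formula.realize_not, hxy] at this
  · intro n F xs
    have := h (Term.equal (Term.func F fun p => Term.var (xs p)) (Term.var (Structure.funMap F xs)))
      (BoundedFormula.IsAtomic.equal _ _).isQF (by simp)
    simpa [Function.comp_def] using this.symm
  · intro n R xs
    constructor
    · intro hR
      by_contra hne
      have := h (R.formula fun p => Term.var (xs p)).not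
        (BoundedFormula.IsAtomic.rel _ _).isQF.not
        (by simpa [Formula.realize_not, Formula.realize_rel] using hne)
      rw [Formula.realize_not, Formula.realize_rel] at this
      exact this (by simpa [Function.comp_def] using hR)
    · intro hR
      have := h (R.formula fun p => Term.var (xs p))
        (BoundedFormula.IsAtomic.rel _ _).isQF
        (by simpa [Formula.realize_rel] using hR)
      simpa [Formula.realize_rel, Function.comp_def] using this

/-- A Σ₁-elementary substructure of a `T`-existentially closed structure is
`T`-existentially closed. -/
theorem isEC_of_sigma1Elementary_into_isEC (T : L.Theory)
    (M N : Type (max u v)) [L.Structure M] [L.Structure N] [Nonempty M] [Nonempty N]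
    (hM : IsEC T M) (i : N ↪[L] M) (hi : Sigma1Elementary i) :
    IsEC T N := by
  obtain ⟨⟨P₀, hP₀, ⟨j₀⟩⟩, hec⟩ := hM
  refine ⟨⟨P₀, hP₀, ⟨j₀.comp i⟩⟩, ?_⟩
  intro P hP j n φ hφ a hφP
  classical
  let T' : L[[M]].Theory := ((L.lhomWithConstants M).onTheory T ∪
    {Formula.equivSentence (φ.relabel (fun p => i (a p)))}) ∪ qfDiag L M
  have hsat : T'.IsSatisfiable := by
    rw [Theory.isSatisfiable_iff_isFinitelySatisfiable]
    intro T0 hT0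
    let F : Finset (L.Formula M) := (T0.image Formula.equivSentence.symm).filter
      (fun θ => θ.IsQF ∧ θ.Realize (id : M → M))
    obtain ⟨θ, hθ, hθr⟩ := exists_conj F (fun θ h => (Finset.mem_filter.1 h).2.1)
    obtain ⟨v, hv, hvr⟩ := exists_retract i hi θ hθ
      ((hθr M id).2 fun η h => (Finset.mem_filter.1 h).2.2)
    letI := constantsOn.structure (fun m => j (v m))
    have hmod : P.carrier ⊨ (T0 : L[[M]].Theory) := by
      rw [Theory.model_iff]
      intro σ hσ
      rcases hT0 hσ with (hσT | hσφ) | ⟨η, h1, h2, rfl⟩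
      · exact ((LHom.onTheory_model (L.lhomWithConstants M) T).2 hP).realize_of_mem σ hσT
      · rw [Set.mem_singleton_iff.1 hσφ]
        refine (Formula.realize_equivSentence P.carrier _).2 ?_
        rw [Formula.realize_relabel]
        convert hφP using 1
        funext p
        change j (v (i (a p))) = _
        rw [hv]
      · refine (Formula.realize_equivSentence P.carrier _).2 ?_
        have hη : η.Realize v := (hθr N v).1 hvr η (Finset.mem_filter.2
          ⟨Finset.mem_image.2 ⟨_, hσ, by simp⟩, h1, h2⟩)
        change η.Realize (fun m => j (v m))
        have := (h1.realize_embedding j (v := v) (xs := (default : Fin 0 → N))).2 hη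
        rw [Subsingleton.elim (j ∘ (default : Fin 0 → N)) default] at this
        exact this
    exact Theory.Model.isSatisfiable P.carrier
  obtain ⟨Q⟩ := hsat
  letI : L.Structure Q := (L.lhomWithConstants M).reduct Q
  haveI : (L.lhomWithConstants M).IsExpansionOn Q := LHom.isExpansionOn_reduct _ _
  have hQ : (Q : Type _) ⊨ T' := Q.is_model
  obtain ⟨hQ1, hQd⟩ := Theory.model_union_iff.1 hQ
  obtain ⟨hQT, hQφ⟩ := Theory.model_union_iff.1 hQ1
  obtain ⟨k, hk⟩ := exists_embedding (L := L) (fun m : M => (L.con m : Q)) (fun θ h1 h2 =>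
    (Formula.realize_equivSentence Q θ).1 (hQd.realize_of_mem _ ⟨θ, h1, h2, rfl⟩))
  have hφQ := (Formula.realize_equivSentence Q _).1 (hQφ.realize_of_mem _ rfl)
  rw [Formula.realize_relabel] at hφQ
  refine hi _ _ hφ _ (hec ⟨Q⟩ ((LHom.onTheory_model _ T).1 hQT) k _ _ hφ _ ?_)
  have hfun : (fun p => k (i (a p))) = (fun m : M => (L.con m : Q)) ∘ fun p => i (a p) :=
    funext fun p => hk _
  rw [← hfun] at hφQ
  exact hφQ

end ModelCompanionship
end

section
/- Let τ be a first-order language and T a τ-theory. Then every model M of T_∀ embeds into a τ-structure which is T-existentially closed: there exist a T-ec τ-structure N and a τ-embedding of M into N. -/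
open FirstOrder FirstOrder.Language

universe u v

namespace ModelCompanionship

variable {L : FirstOrder.Language.{u, v}}

/-- Compactness for formulas with parameters, relative to a theory. -/
theorem compactness_formulas (T : L.Theory) {α : Type (max u v)} (S : Set (L.Formula α))
    (h : ∀ S0 : Set (L.Formula α), S0.Finite → S0 ⊆ S →
      ∃ N : BStruc L, N.carrier ⊨ T ∧ ∃ w : α → N.carrier, ∀ φ ∈ S0, φ.Realize w) :
    ∃ N : BStruc L, N.carrier ⊨ T ∧ ∃ w : α → N.carrier, ∀ φ ∈ S, φ.Realize w := by
  have hsat : ((L.lhomWithConstants α).onTheory T ∪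
      (Formula.equivSentence '' S) : L[[α]].Theory).IsSatisfiable := by
    rw [Theory.isSatisfiable_iff_isFinitelySatisfiable]
    intro T0 hT0
    obtain ⟨N, hN, w, hw⟩ := h {φ | φ ∈ S ∧ Formula.equivSentence φ ∈ T0}
      ((T0.finite_toSet.preimage (Formula.equivSentence.injective.injOn)).subset
        (fun φ hφ => hφ.2)) (fun φ hφ => hφ.1)
    let := constantsOn.structure w
    have : N.carrier ⊨ (T0 : L[[α]].Theory) := by
      refine ⟨fun ψ hψ => ?_⟩
      rcases hT0 hψ with h1 | ⟨φ, h1, rfl⟩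
      · exact ((LHom.onTheory_model _ T).2 hN).realize_of_mem ψ h1
      · have := hw φ ⟨h1, hψ⟩
        rw [← Formula.equivSentence.symm_apply_apply φ] at this
        exact (Formula.realize_equivSentence_symm N.carrier _ w).1 this
    exact Theory.Model.isSatisfiable N.carrier
  obtain ⟨N⟩ := hsat
  let : L.Structure N := (L.lhomWithConstants α).reduct N
  have : (L.lhomWithConstants α).IsExpansionOn N := LHom.isExpansionOn_reduct _ _
  refine ⟨⟨N⟩, ?_, fun a => (L.con a : N), fun φ hφ => ?_⟩
  · refine (LHom.onTheory_model (L.lhomWithConstants α) T).1 ?_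
    exact N.is_model.mono Set.subset_union_left
  · exact (Formula.realize_equivSentence N φ).1
      (N.is_model.realize_of_mem _ (Or.inr ⟨φ, hφ, rfl⟩))

/-- The quantifier-free diagram of a structure, as formulas with parameters. -/
def qfDiagram (M : Type (max u v)) [L.Structure M] : Set (L.Formula M) :=
  {φ | BoundedFormula.IsQF φ ∧ φ.Realize id}

theorem isQF_restrictFreeVar {α β : Type*} [DecidableEq α] {n : ℕ} {φ : L.BoundedFormula α n}
    (h : φ.IsQF) : ∀ f : φ.freeVarFinset → β, (φ.restrictFreeVar f).IsQF := by
  induction h with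
  | falsum => intro f; exact BoundedFormula.IsQF.falsum
  | of_isAtomic h =>
    intro f
    cases h with
    | equal t₁ t₂ => exact (BoundedFormula.IsAtomic.equal _ _).isQF
    | rel R ts => exact (BoundedFormula.IsAtomic.rel _ _).isQF
  | imp _ _ ih1 ih2 => intro f; exact (ih1 _).imp (ih2 _)

/-- A quantifier-free formula true in a model of `T_∀` is realized in a model of `T`. -/
theorem qf_realized (T : L.Theory) (M : Type (max u v)) [L.Structure M]
    (hM : M ⊨ univConsequences T) (θ : L.Formula M) (hθ : θ ∈ qfDiagram M) :
    ∃ N : BStruc L, N.carrier ⊨ T ∧ ∃ w : M → N.carrier, θ.Realize w := by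
  classical
  by_contra hcon
  push Not at hcon
  let e := θ.freeVarFinset.equivFin
  let θ' : L.Formula (Fin _) := BoundedFormula.restrictFreeVar θ e
  let ψ : L.BoundedFormula Empty _ := BoundedFormula.relabel Sum.inr θ'
  have hψ : ψ.not.IsQF := ((isQF_restrictFreeVar hθ.1 _).relabel _).not
  have hmem : ψ.not.alls ∈ univConsequences T := by
    refine ⟨⟨_, _, hψ, rfl⟩, fun N hN => ?_⟩
    refine BoundedFormula.realize_alls.2 fun xs => ?_
    rw [BoundedFormula.realize_not]
    intro hx
    have hx' : θ'.Realize xs := (Formula.realize_relabel_sumInr θ').1 hx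
    let w : M → N.carrier := fun m =>
      if hm : m ∈ θ.freeVarFinset then xs (e ⟨m, hm⟩) else Classical.arbitrary _
    refine hcon N hN w ((BoundedFormula.realize_restrictFreeVar w ?_).1 hx')
    intro a
    simp [w]
  have h1 := BoundedFormula.realize_alls.1 (hM.realize_of_mem _ hmem)
    (fun i => (e.symm i : M))
  rw [BoundedFormula.realize_not] at h1
  apply h1
  refine (Formula.realize_relabel_sumInr θ').2 ?_
  refine (BoundedFormula.realize_restrictFreeVar (id : M → M) ?_).2 hθ.2
  intro a
  simp

theorem diagram_consistent (T : L.Theory) (M : Type (max u v)) [L.Structure M]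
    (hM : M ⊨ univConsequences T) :
    ∃ N : BStruc L, N.carrier ⊨ T ∧ ∃ w : M → N.carrier,
      ∀ φ ∈ qfDiagram (L := L) M, φ.Realize w := by
  refine compactness_formulas T _ fun S0 hfin hsub => ?_
  have : ∃ θ ∈ qfDiagram (L := L) M, ∀ (N : BStruc L) (w : M → N.carrier), θ.Realize w →
      ∀ φ ∈ S0, φ.Realize w := by
    induction S0, hfin using Set.Finite.induction_on with
    | empty =>
      exact ⟨⊤, ⟨BoundedFormula.IsQF.top, by simp⟩, by simp⟩
    | @insert φ S _ _ ih =>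
      obtain ⟨θ, hθ, h⟩ := ih (fun x hx => hsub (Or.inr hx))
      have hφ := hsub (Set.mem_insert φ S)
      refine ⟨θ ⊓ φ, ⟨hθ.1.inf hφ.1, Formula.realize_inf.2 ⟨hθ.2, hφ.2⟩⟩, ?_⟩
      intro N w hw
      rw [Formula.realize_inf] at hw
      rintro ψ (rfl | hψ)
      · exact hw.2
      · exact h N w hw.1 ψ hψ
  obtain ⟨θ, hθ, h⟩ := this
  obtain ⟨N, hN, w, hw⟩ := qf_realized T M hM θ hθ
  exact ⟨N, hN, w, h N w hw⟩

/-- A map realizing the quantifier-free diagram is an embedding. -/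
theorem embedding_of_diagram {M : Type (max u v)} [L.Structure M] (N : BStruc L)
    (w : M → N.carrier) (h : ∀ φ ∈ qfDiagram (L := L) M, φ.Realize w) :
    ∃ j : M ↪[L] N.carrier, ∀ x, j x = w x := by
  refine ⟨⟨⟨w, ?_⟩, ?_, ?_⟩, fun _ => rfl⟩
  · intro a b hab
    by_contra hne
    have := h ((Term.equal (Term.var a) (Term.var b) : L.Formula M).not)
      ⟨(BoundedFormula.IsAtomic.equal _ _).isQF.not, by
        rw [Formula.realize_not, Formula.realize_equal]; exact hne⟩
    rw [Formula.realize_not, Formula.realize_equal] at this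
    exact this hab
  · intro n f x
    have := h (Term.equal (Term.func f fun i => Term.var (x i)) (Term.var (Structure.funMap f x))
        : L.Formula M)
      ⟨(BoundedFormula.IsAtomic.equal _ _).isQF, by
        rw [Formula.realize_equal]; rfl⟩
    rw [Formula.realize_equal] at this
    exact this.symm
  · intro n r x
    constructor
    · intro hr
      by_contra hne
      have := h ((Relations.formula r (fun i => Term.var (x i)) : L.Formula M).not)
        ⟨(BoundedFormula.IsAtomic.rel _ _).isQF.not, by
          rw [Formula.realize_not, Formula.realize_rel]; exact hne⟩
      rw [Formula.realize_not, Formula.realize_rel] at this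
      exact this hr
    · intro hr
      have := h (Relations.formula r (fun i => Term.var (x i)) : L.Formula M)
        ⟨(BoundedFormula.IsAtomic.rel _ _).isQF, by
          rw [Formula.realize_rel]; exact hr⟩
      rw [Formula.realize_rel] at this
      exact this

theorem qf_up {α M N : Type*} [L.Structure M] [L.Structure N] (k : M ↪[L] N) {n : ℕ}
    {φ : L.BoundedFormula α n} (h : φ.IsQF) (w : α → M) (xs : Fin n → M) :
    φ.Realize (k ∘ w) (k ∘ xs) ↔ φ.Realize w xs :=
  h.realize_embedding k

theorem existential_up {α M N : Type*} [L.Structure M] [L.Structure N] (k : M ↪[L] N)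
    {φ : L.Formula α} (h : IsExistentialFormula φ) (w : α → M) (hw : φ.Realize w) :
    φ.Realize (k ∘ w) := by
  obtain ⟨n, ψ, hψ, rfl⟩ := h
  obtain ⟨xs, hxs⟩ := BoundedFormula.realize_exs.1 hw
  exact BoundedFormula.realize_exs.2 ⟨k ∘ xs, (qf_up k hψ w xs).2 hxs⟩

theorem models_univ (T : L.Theory) (N : BStruc L) (hN : N.carrier ⊨ T) :
    N.carrier ⊨ univConsequences T :=
  ⟨fun _ hφ => hφ.2 N hN⟩

/-- Formulas preserved upwards along embeddings. -/
def upFormulas (L : FirstOrder.Language.{u, v}) (α : Type (max u v)) : Set (L.Formula α) :=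
  {φ | ∀ (N C : BStruc L) (k : N.carrier ↪[L] C.carrier) (w : α → N.carrier),
    φ.Realize w → φ.Realize (k ∘ w)}

/-- One step: an extension deciding all existential formulas with old parameters. -/
theorem ec_step (T : L.Theory) (B : BStruc L) (hB : B.carrier ⊨ univConsequences T) :
    ∃ N : BStruc L, N.carrier ⊨ univConsequences T ∧ ∃ j : B.carrier ↪[L] N.carrier,
      ∀ C : BStruc L, C.carrier ⊨ T → ∀ k : N.carrier ↪[L] C.carrier,
        ∀ (n : ℕ) (φ : L.Formula (Fin n)), IsExistentialFormula φ → ∀ a : Fin n → B.carrier,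
          φ.Realize (k ∘ j ∘ a) → φ.Realize (j ∘ a) := by
  let P : Set (Set (L.Formula B.carrier)) := {S | S ⊆ upFormulas L B.carrier ∧
    ∃ N : BStruc L, N.carrier ⊨ T ∧ ∃ w : B.carrier → N.carrier, ∀ φ ∈ S, φ.Realize w}
  have hD : qfDiagram B.carrier ∈ P := by
    refine ⟨fun φ hφ N C k w hw => ?_, diagram_consistent T B.carrier hB⟩
    have := (qf_up k hφ.1 w default).2 hw
    rwa [Subsingleton.elim (k ∘ default) default] at this
  obtain ⟨S, hDS, hS⟩ := zorn_subset_nonempty P (by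
    intro c hc hchain hne
    refine ⟨⋃₀ c, ⟨Set.sUnion_subset fun s hs => (hc hs).1, ?_⟩,
      fun s hs => Set.subset_sUnion_of_mem hs⟩
    refine compactness_formulas T _ fun S0 hfin hsub => ?_
    obtain ⟨s, hs, hss⟩ := hchain.directedOn.exists_mem_subset_of_finite_of_subset_sUnion
      hne hfin hsub
    obtain ⟨N, hN, w, hw⟩ := (hc hs).2
    exact ⟨N, hN, w, fun φ hφ => hw φ (hss hφ)⟩) _ hD
  obtain ⟨hup, N, hN, w, hw⟩ := hS.prop
  obtain ⟨j, hj⟩ := embedding_of_diagram N w fun φ hφ => hw φ (hDS hφ)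
  obtain rfl : (j : B.carrier → N.carrier) = w := funext hj
  refine ⟨N, models_univ T N hN, j, fun C hC k n φ hφ a hr => ?_⟩
  have hins : insert (φ.relabel a) S ∈ P := by
    refine ⟨Set.insert_subset ?_ hup, C, hC, k ∘ j, ?_⟩
    · intro N' C' k' w' hw'
      rw [Formula.realize_relabel] at hw' ⊢
      exact existential_up k' hφ _ hw'
    · rintro ψ (rfl | hψ)
      · rw [Formula.realize_relabel]; exact hr
      · exact hup hψ N C k j (hw ψ hψ)
  have := hw _ (hS.le_of_ge hins (Set.subset_insert _ _) (Set.mem_insert _ _))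
  rwa [Formula.realize_relabel] at this

/-- Every model of `T_∀` embeds into a `T`-existentially closed structure. -/
theorem exists_ec_extension (T : L.Theory)
    (M : Type (max u v)) [L.Structure M] [Nonempty M] (hM : M ⊨ univConsequences T) :
    ∃ N : BStruc L, IsEC T N.carrier ∧ Nonempty (M ↪[L] N.carrier) := by
  choose next hnext j hj using ec_step T
  let c : ℕ → {B : BStruc L // B.carrier ⊨ univConsequences T} := fun n =>
    Nat.rec ⟨⟨M⟩, hM⟩ (fun _ B => ⟨next B.1 B.2, hnext B.1 B.2⟩) n
  let G : ℕ → Type (max u v) := fun n => (c n).1.carrier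
  let f : ∀ n, G n ↪[L] G (n + 1) := fun n => j (c n).1 (c n).2
  let F : ∀ m n, m ≤ n → G m ↪[L] G n := fun m n h => DirectedSystem.natLERec f m n h
  have : DirectedSystem G fun i j h => F i j h := DirectedSystem.natLERec.directedSystem f
  let ι : ∀ n, G n ↪[L] Language.DirectLimit G F := fun n => Language.DirectLimit.of L ℕ G F n
  have hι : ∀ n x, ι (n + 1) (f n x) = ι n x := by
    intro n x
    have h1 : F n (n + 1) (Nat.le_succ n) x = f n x := by
      change DirectedSystem.natLERec f n (n + 1) _ x = _
      rw [DirectedSystem.coe_natLERec]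
      exact Nat.leRecOn_succ' (C := G) (next := fun {k} => f k) x
    rw [← h1]
    exact Language.DirectLimit.of_f
  have hfin : ∀ {n : ℕ} (x : Fin n → Language.DirectLimit G F), ∃ i, ∃ y : Fin n → G i, x = ι i ∘ y :=
    fun x => Language.DirectLimit.exists_quotient_mk'_sigma_mk'_eq G F x
  have : Nonempty (Language.DirectLimit G F) := ⟨ι 0 (Classical.arbitrary M)⟩
  have hlim : Language.DirectLimit G F ⊨ univConsequences T := by
    refine ⟨fun φ hφ => ?_⟩
    obtain ⟨⟨n, ψ, hψ, rfl⟩, -⟩ := id hφ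
    refine BoundedFormula.realize_alls.2 fun xs => ?_
    obtain ⟨i, y, rfl⟩ := hfin xs
    have h1 := BoundedFormula.realize_alls.1 ((c i).2.realize_of_mem _ hφ) y
    have h2 := (qf_up (ι i) hψ default y).2 h1
    rwa [Subsingleton.elim (ι i ∘ default) default] at h2
  refine ⟨⟨Language.DirectLimit G F⟩, ⟨?_, ?_⟩, ⟨ι 0⟩⟩
  · obtain ⟨N, hN, w, hw⟩ := diagram_consistent T (Language.DirectLimit G F) hlim
    obtain ⟨e, -⟩ := embedding_of_diagram N w hw
    exact ⟨N, hN, ⟨e⟩⟩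
  · intro C hC k n φ hφ a hr
    obtain ⟨i, y, rfl⟩ := hfin a
    have h1 : (fun x => ι i (y x)) = ι (i + 1) ∘ (f i ∘ y) :=
      funext fun x => (hι i (y x)).symm
    have h2 := hj (c i).1 (c i).2 C hC (k.comp (ι (i + 1))) n φ hφ y (by
      convert hr using 1
      funext x
      exact congrArg k (hι i (y x)))
    have h3 := existential_up (ι (i + 1)) hφ _ h2
    change φ.Realize (fun x => ι i (y x))
    rw [h1]
    exact h3

end ModelCompanionship
end
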